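/- arXiv:0903.3688 — 6 statements merged into one kernel-verified Lean document; each statement's English description precedes it below -/
import Mathlib

section
/- The closed right half-plane H = {z ∈ ℂ : Re(z) ≥ 0} is a Rolle's domain. -/
/-- A set `R ⊆ ℂ` is a Rolle's domain if every nonconstant complex polynomial `P`
with `P(-1) = P(1)` has a critical point (a root of `P'`) lying in `R`. -/
def IsRollesDomain (R : Set ℂ) : Prop :=
  ∀ P : Polynomial ℂ, 0 < P.natDegree → P.eval (-1) = P.eval 1 →
    ∃ z ∈ R, P.derivative.eval z = 0

open Polynomial in
lemma rolle_sum_aux (a : ℝ) (v0 : ℂ) (s : Multiset ℂ)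
    (h : ∀ v ∈ s, a * (v.re ^ 2 + v.im ^ 2) ≤ - v.re) (ha : 0 < a) :
    a * (2 * (s.sum.re * v0.re + s.sum.im * v0.im)) - s.card * (a * (v0.re ^ 2 + v0.im ^ 2))
      ≤ - s.sum.re := by
  induction s using Multiset.induction_on with
  | empty => simp
  | cons v s ih =>
    have h1 := ih (fun w hw => h w (Multiset.mem_cons_of_mem hw))
    have h2 := h v (Multiset.mem_cons_self v s)
    have h3 : 0 ≤ a * ((v.re - v0.re) ^ 2 + (v.im - v0.im) ^ 2) := by positivity
    simp only [Multiset.sum_cons, Multiset.card_cons, Complex.add_re, Complex.add_im]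
    push_cast
    nlinarith

/-- Laguerre's theorem on polar derivatives, for the left half-plane. -/
lemma rolle_laguerre (n : ℕ) (G : Polynomial ℂ) (hd : G.natDegree ≤ n + 1)
    (hG : ∀ ζ : ℂ, ζ.re < 0 → G.eval ζ ≠ 0) (z ζ : ℂ) (hz : z.re < 0) (hζ : ζ.re < 0) :
    ((n : ℂ) + 1) * G.eval ζ - (ζ - z) * G.derivative.eval ζ ≠ 0 := by
  intro h0
  have hGζ := hG ζ hζ
  by_cases hzz : ζ = z
  · subst hzz
    simp only [sub_self, zero_mul, sub_zero, mul_eq_zero] at h0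
    rcases h0 with h0 | h0
    · exact Nat.cast_add_one_ne_zero n h0
    · exact hGζ h0
  have hne : ζ - z ≠ 0 := sub_ne_zero.mpr hzz
  have hdiv := (IsAlgClosed.splits G).eval_derivative_div_eval_of_ne_zero hGζ
  set s := G.roots.map (fun y => 1 / (ζ - y)) with hs
  have hsum : s.sum = ((n : ℂ) + 1) * (ζ - z)⁻¹ := by
    rw [← hdiv]
    field_simp
    linear_combination -h0
  have hcard : (s.card : ℝ) ≤ n + 1 := by
    rw [hs, Multiset.card_map]
    exact_mod_cast (G.card_roots').trans hd
  have key : ∀ u : ℂ, u ≠ 0 → (u⁻¹).re ^ 2 + (u⁻¹).im ^ 2 = (Complex.normSq u)⁻¹ ∧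
      (u⁻¹).re = u.re * (Complex.normSq u)⁻¹ ∧ 0 < (Complex.normSq u)⁻¹ := by
    intro u hu
    refine ⟨?_, ?_, inv_pos.mpr (Complex.normSq_pos.mpr hu)⟩
    · rw [← map_inv₀, Complex.normSq_apply]; ring
    · rw [Complex.inv_re]; rfl
  have hmem : ∀ v ∈ s, (-ζ.re) * (v.re ^ 2 + v.im ^ 2) ≤ - v.re := by
    intro v hv
    rw [hs, Multiset.mem_map] at hv
    obtain ⟨y, hy, rfl⟩ := hv
    have hy0 : 0 ≤ y.re := by
      by_contra hlt
      exact hG y (not_le.mp hlt) (Polynomial.isRoot_of_mem_roots hy)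
    have hu : ζ - y ≠ 0 := by
      intro h
      have := congrArg Complex.re h
      simp at this
      linarith
    obtain ⟨k1, k2, k3⟩ := key _ hu
    rw [one_div, k1, k2, Complex.sub_re]
    nlinarith
  have hmain := rolle_sum_aux (-ζ.re) (ζ - z)⁻¹ s hmem (by linarith)
  obtain ⟨k1, k2, k3⟩ := key _ hne
  have e1 : s.sum.re = (n + 1) * ((ζ - z)⁻¹).re := by
    rw [hsum]; simp
  have e2 : s.sum.im = (n + 1) * ((ζ - z)⁻¹).im := by
    rw [hsum]; simp
  rw [e1, e2, k1] at hmain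
  have e3 : -ζ.re * (2 * ((n + 1) * ((ζ - z)⁻¹).re * ((ζ - z)⁻¹).re
      + (n + 1) * ((ζ - z)⁻¹).im * ((ζ - z)⁻¹).im))
      = -ζ.re * 2 * (n + 1) * (Complex.normSq (ζ - z))⁻¹ := by
    rw [← k1]; ring
  rw [e3, k2, Complex.sub_re] at hmain
  generalize (Complex.normSq (ζ - z))⁻¹ = q at *
  have h5 : (s.card : ℝ) * (-ζ.re * q) ≤ (n + 1) * (-ζ.re * q) :=
    mul_le_mul_of_nonneg_right hcard (by nlinarith)
  have hn : (0 : ℝ) < n + 1 := by positivity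
  have h6 : 0 < (n + 1) * q * (-z.re) := by
    have := mul_pos hn k3
    exact mul_pos this (by linarith)
  nlinarith

/-- The polynomial `ζ ↦ L ((X - ζ) ^ n)`. -/
noncomputable def rolleG : ℕ → (Polynomial ℂ →ₗ[ℂ] ℂ) → Polynomial ℂ
  | 0, L => Polynomial.C (L 1)
  | n + 1, L => rolleG n (L.comp (LinearMap.mulLeft ℂ Polynomial.X)) - Polynomial.X * rolleG n L

open Polynomial in
lemma rolleG_eval (n : ℕ) : ∀ (L : Polynomial ℂ →ₗ[ℂ] ℂ) (ζ : ℂ),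
    (rolleG n L).eval ζ = L ((X - C ζ) ^ n) := by
  induction n with
  | zero => intro L ζ; simp [rolleG]
  | succ n ih =>
    intro L ζ
    have : (X - C ζ) ^ (n + 1) = X * (X - C ζ) ^ n - ζ • (X - C ζ) ^ n := by
      rw [smul_eq_C_mul]; ring
    rw [this, map_sub, map_smul]
    simp [rolleG, ih]

open Polynomial in
lemma rolleG_natDegree (n : ℕ) : ∀ (L : Polynomial ℂ →ₗ[ℂ] ℂ), (rolleG n L).natDegree ≤ n := by
  induction n with
  | zero => intro L; simp [rolleG]
  | succ n ih =>
    intro L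
    rw [rolleG]
    refine (natDegree_sub_le _ _).trans (max_le ((ih _).trans (Nat.le_succ n)) ?_)
    refine natDegree_mul_le.trans ?_
    have := ih L
    rw [natDegree_X]
    omega

open Polynomial in
lemma rolleG_derivative (n : ℕ) : ∀ (L : Polynomial ℂ →ₗ[ℂ] ℂ),
    derivative (rolleG (n + 1) L) = -((n : ℂ[X]) + 1) * rolleG n L := by
  induction n with
  | zero => intro L; simp [rolleG]
  | succ n ih =>
    intro L
    rw [rolleG, derivative_sub, derivative_mul, ih, ih]
    conv_rhs => rw [rolleG]
    rw [show rolleG (n + 1) L = rolleG n (L.comp (LinearMap.mulLeft ℂ X)) - X * rolleG n L from rfl]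
    simp only [derivative_X]
    push_cast
    ring

open Polynomial in
/-- Walsh's coincidence theorem for the left half-plane, in functional form. -/
lemma rolle_walsh (s : Multiset ℂ) : ∀ (L : Polynomial ℂ →ₗ[ℂ] ℂ),
    (∀ z ∈ s, z.re < 0) → (∀ ζ : ℂ, ζ.re < 0 → L ((X - C ζ) ^ s.card) ≠ 0) →
    L ((s.map (fun z => X - C z)).prod) ≠ 0 := by
  induction s using Multiset.induction_on with
  | empty =>
    intro L _ h
    simpa using h (-1) (by simp)
  | cons z s ih =>
    intro L hs h
    have hz := hs z (Multiset.mem_cons_self z s)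
    have := ih (L.comp (LinearMap.mulLeft ℂ (X - C z)))
      (fun w hw => hs w (Multiset.mem_cons_of_mem hw)) ?_
    · simpa using this
    intro ζ hζ
    rw [Multiset.card_cons] at h
    have hl := rolle_laguerre s.card (rolleG (s.card + 1) L) (rolleG_natDegree _ _)
      (fun w hw => by rw [rolleG_eval]; exact h w hw) z ζ hz hζ
    rw [rolleG_derivative] at hl
    have hc : ((s.card : ℂ) + 1) ≠ 0 := Nat.cast_add_one_ne_zero _
    intro h0
    apply hl
    have e : (X - C z) * (X - C ζ) ^ s.card
        = (X - C ζ) ^ (s.card + 1) + (ζ - z) • (X - C ζ) ^ s.card := by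
      rw [smul_eq_C_mul, C_sub]; ring
    simp only [LinearMap.comp_apply, LinearMap.mulLeft_apply] at h0
    rw [e, map_add, map_smul, smul_eq_mul] at h0
    simp only [eval_mul, rolleG_eval, eval_neg, eval_add, eval_natCast, eval_one]
    linear_combination ((s.card : ℂ) + 1) * h0

open Polynomial in
/-- Integration over `[-1, 1]` as a linear functional. -/
noncomputable def rolleL : Polynomial ℂ →ₗ[ℂ] ℂ where
  toFun q := ∫ t in (-1 : ℝ)..1, q.eval (t : ℂ)
  map_add' p q := by
    simp only [eval_add]
    exact intervalIntegral.integral_add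
      (Continuous.intervalIntegrable (by fun_prop) _ _)
      (Continuous.intervalIntegrable (by fun_prop) _ _)
  map_smul' c q := by
    simp

open Polynomial in
lemma rolleL_derivative (P : Polynomial ℂ) : rolleL (derivative P) = P.eval 1 - P.eval (-1) := by
  have := intervalIntegral.integral_eq_sub_of_hasDerivAt (a := -1) (b := 1)
    (f := fun t : ℝ => P.eval (t : ℂ)) (f' := fun t : ℝ => (derivative P).eval (t : ℂ))
    (fun t _ => (P.hasDerivAt (t : ℂ)).comp_ofReal)
    (Continuous.intervalIntegrable (by fun_prop) _ _)
  simpa [rolleL] using this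

open Polynomial in
lemma rolleL_pow (n : ℕ) (ζ : ℂ) (hζ : ζ.re < 0) : rolleL ((X - C ζ) ^ n) ≠ 0 := by
  intro h
  have h1 := rolleL_derivative ((X - C ζ) ^ (n + 1))
  have h2 : derivative ((X - C ζ) ^ (n + 1)) = ((n : ℂ) + 1) • (X - C ζ) ^ n := by
    rw [derivative_X_sub_C_pow, smul_eq_C_mul]; simp
  rw [h2, map_smul, h, smul_zero] at h1
  have h3 : (1 - ζ) ^ (n + 1) = (-1 - ζ) ^ (n + 1) := by
    simp at h1
    linear_combination -h1
  have h4 : ‖1 - ζ‖ = ‖-1 - ζ‖ := by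
    have := congrArg norm h3
    rw [norm_pow, norm_pow] at this
    exact (pow_left_inj₀ (norm_nonneg _) (norm_nonneg _) (Nat.succ_ne_zero n)).mp this
  have h5 : Complex.normSq (1 - ζ) = Complex.normSq (-1 - ζ) := by
    rw [Complex.normSq_eq_norm_sq, Complex.normSq_eq_norm_sq, h4]
  simp [Complex.normSq_apply] at h5
  nlinarith

theorem right_half_plane_is_rolles_domain :
    IsRollesDomain {z : ℂ | 0 ≤ z.re} := by
  intro P hP hP1
  by_contra hcon
  have hroots : ∀ z ∈ P.derivative.roots, z.re < 0 := by
    intro z hz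
    by_contra hlt
    exact hcon ⟨z, not_lt.mp hlt, Polynomial.isRoot_of_mem_roots hz⟩
  have hne : P.derivative ≠ 0 := by
    intro h
    exact hcon ⟨0, by simp, by simp [h]⟩
  have hw := rolle_walsh P.derivative.roots rolleL hroots (fun ζ hζ => rolleL_pow _ ζ hζ)
  have h0 := rolleL_derivative P
  rw [hP1, sub_self, (IsAlgClosed.splits P.derivative).eq_prod_roots, ← Polynomial.smul_eq_C_mul,
    map_smul, smul_eq_zero] at h0
  rcases h0 with h0 | h0
  · exact hne (Polynomial.leadingCoeff_eq_zero.mp h0)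
  · exact hw h0
end

section
/- For every irrational real number α with 0 < α < 1, the set H \ {i·cot(απ)} is a Rolle's domain, where H = {z ∈ ℂ : Re(z) ≥ 0}. In particular, H is not a minimal Rolle's domain. -/
/-- A Rolle's domain `R` is minimal if no proper subset of `R` is a Rolle's domain. -/
def IsMinimalRollesDomain (R : Set ℂ) : Prop :=
  IsRollesDomain R ∧ ∀ S : Set ℂ, S ⊂ R → ¬ IsRollesDomain S

open Polynomial in
/-- Polar derivative of formal degree `m` with pole `q`. -/
noncomputable def polarD (m : ℕ) (q : ℂ) : Polynomial ℂ →ₗ[ℂ] Polynomial ℂ :=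
  (m : ℂ) • LinearMap.id + (LinearMap.mulLeft ℂ (C q - X)) ∘ₗ Polynomial.derivative

open Polynomial in
/-- Iterated polar derivatives. -/
noncomputable def iterD : List ℂ → Polynomial ℂ →ₗ[ℂ] Polynomial ℂ
  | [] => LinearMap.id
  | q :: qs => iterD qs ∘ₗ polarD (qs.length + 1) q

open Polynomial in
lemma polarD_apply (m : ℕ) (q : ℂ) (p : ℂ[X]) :
    polarD m q p = C (m : ℂ) * p + (C q - X) * derivative p := by
  simp [polarD, Polynomial.smul_eq_C_mul]

open Polynomial in
lemma iterD_pow (qs : List ℂ) (a : ℂ) :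
    iterD qs ((X - C a) ^ qs.length)
      = C ((qs.length.factorial : ℂ) * (qs.map (fun q => q - a)).prod) := by
  induction qs with
  | nil => simp [iterD]
  | cons q qs ih =>
    have h : polarD (qs.length + 1) q ((X - C a) ^ (qs.length + 1))
        = (((qs.length + 1 : ℕ) : ℂ) * (q - a)) • (X - C a) ^ qs.length := by
      rw [polarD_apply, Polynomial.smul_eq_C_mul, derivative_X_sub_C_pow]
      simp only [map_mul, map_sub, Nat.add_sub_cancel, map_natCast]
      ring
    simp only [iterD, List.length_cons, LinearMap.comp_apply, h, map_smul, ih]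
    rw [Polynomial.smul_eq_C_mul, ← C_mul]
    congr 1
    simp only [List.map_cons, List.prod_cons, Nat.factorial_succ]
    push_cast
    ring

lemma multiset_zero (s : Multiset ℂ) (f : ℂ → ℝ) (h0 : ∀ r ∈ s, 0 ≤ f r)
    (hs : (s.map f).sum = 0) : ∀ r ∈ s, f r = 0 := by
  intro r hr
  refine le_antisymm ?_ (h0 r hr)
  rw [← hs]
  refine Multiset.single_le_sum ?_ _ (Multiset.mem_map_of_mem f hr)
  intro x hx
  obtain ⟨y, hy, rfl⟩ := Multiset.mem_map.1 hx
  exact h0 y hy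

lemma multiset_functional (s : Multiset ℂ) (g : ℂ → ℂ) (a b c : ℝ) :
    (s.map (fun r => a * (g r).re + b * (g r).im + c)).sum
      = a * (s.map g).sum.re + b * (s.map g).sum.im + s.card * c := by
  induction s using Multiset.induction_on with
  | empty => simp
  | cons r s ih =>
    simp only [Multiset.map_cons, Multiset.sum_cons, ih, Complex.add_re, Complex.add_im,
      Multiset.card_cons]
    push_cast
    ring

lemma multiset_const (s : Multiset ℂ) (g : ℂ → ℂ) (c : ℂ) (h : ∀ r ∈ s, r = c) :
    (s.map g).sum = s.card * g c := by
  rw [Multiset.map_congr rfl (g := fun _ => g c) (fun r hr => by rw [h r hr])]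
  simp

/-- Center of mass of points of `D` is not `q`. -/
lemma center_ne (s : Multiset ℂ) (c q : ℂ) (hs : s.card ≠ 0) (hq : q.re = 0) (hqc : q ≠ c)
    (hc : c.re = 0)
    (h : ∀ r ∈ s, r.re < 0 ∨ r = c) : s.sum ≠ s.card * q := by
  intro e
  have h1 := multiset_functional s id (-1) 0 0
  have h2 : ∀ r ∈ s, (-1 : ℝ) * (id r : ℂ).re + 0 * (id r : ℂ).im + 0 = 0 := by
    apply multiset_zero
    · intro r hr
      rcases h r hr with h | h
      · simp; exact h.le
      · simp [h, hc]
    · rw [h1]; simp [e, hq]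
  have h3 : ∀ r ∈ s, r = c := by
    intro r hr
    have := h2 r hr
    simp at this
    rcases h r hr with h | h
    · exact absurd this h.ne
    · exact h
  have h4 := multiset_const s id c h3
  rw [Multiset.map_id, e, id] at h4
  exact hqc (mul_left_cancel₀ (by exact_mod_cast hs) h4)

lemma center_inv_ne (s : Multiset ℂ) (c q z : ℂ) (hs : s.card ≠ 0) (hq : q.re = 0)
    (hqc : q ≠ c) (hc : c.re = 0) (hz : 0 ≤ z.re) (hzc : z ≠ c) (hzq : z ≠ q)
    (h : ∀ r ∈ s, r.re < 0 ∨ r = c) :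
    (s.map (fun r => 1 / (z - r))).sum ≠ s.card * (1 / (z - q)) := by
  intro e
  set w := 1 / (z - q) with hw
  have key : ∀ r : ℂ, z ≠ r → ∀ v : ℂ, v = 1 / (z - r) →
      v.re - z.re * Complex.normSq v = - r.re * Complex.normSq v := by
    intro r hr v hv
    have hne : Complex.normSq (z - r) ≠ 0 := by
      simpa [Complex.normSq_eq_zero, sub_eq_zero] using hr
    have h1 : v.re = (z.re - r.re) / Complex.normSq (z - r) := by
      rw [hv]; simp [Complex.inv_re]
    have h2 : Complex.normSq v = 1 / Complex.normSq (z - r) := by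
      rw [hv]; simp
    rw [h1, h2]
    field_simp
    ring
  have hzr : ∀ r ∈ s, z ≠ r := by
    intro r hr e
    rcases h r hr with h | h
    · rw [← e] at h; linarith
    · exact hzc (e.trans h)
  have hw0 := key q hzq w hw
  rw [hq] at hw0
  have h1 := multiset_functional s (fun r => 1 / (z - r)) (1 - 2 * z.re * w.re)
    (-2 * z.re * w.im) (z.re * Complex.normSq w)
  have hre : ∀ r ∈ s, r.re ≤ 0 := by
    intro r hr
    rcases h r hr with h | h
    · exact h.le
    · rw [h, hc]
  have id1 : ∀ r ∈ s, (1 - 2 * z.re * w.re) * (1 / (z - r)).re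
      + (-2 * z.re * w.im) * (1 / (z - r)).im + z.re * Complex.normSq w
      = z.re * Complex.normSq (1 / (z - r) - w) + (- r.re) * Complex.normSq (1 / (z - r)) := by
    intro r hr
    rw [← key r (hzr r hr) _ rfl]
    simp only [Complex.normSq_apply, Complex.sub_re, Complex.sub_im]
    ring
  have h2 := multiset_zero s _ (fun r hr => by
    rw [id1 r hr]
    have := hre r hr
    have h3 := Complex.normSq_nonneg (1 / (z - r) - w)
    have h4 := Complex.normSq_nonneg (1 / (z - r))
    have h5 : 0 ≤ - r.re := by linarith
    positivity) (h1.trans (by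
      rw [e]
      simp only [Complex.mul_re, Complex.mul_im, Complex.natCast_re, Complex.natCast_im]
      rw [Complex.normSq_apply] at hw0 ⊢
      linear_combination (s.card : ℝ) * hw0))
  have h3 : ∀ r ∈ s, r = c := by
    intro r hr
    have h6 := h2 r hr
    rw [id1 r hr] at h6
    rcases h r hr with h | h
    · exfalso
      have h3 := Complex.normSq_nonneg (1 / (z - r) - w)
      have h4 : 0 < Complex.normSq (1 / (z - r)) := by
        rw [Complex.normSq_pos]
        exact one_div_ne_zero (sub_ne_zero.2 (hzr r hr))
      have h5 : 0 < - r.re := by linarith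
      have : 0 < z.re * Complex.normSq (1 / (z - r) - w)
        + (- r.re) * Complex.normSq (1 / (z - r)) := by positivity
      linarith
    · exact h
  have h4 := multiset_const s (fun r => 1 / (z - r)) c h3
  rw [e] at h4
  have h5 := mul_left_cancel₀ (by exact_mod_cast hs) h4
  rw [hw] at h5
  simp only [one_div, inv_inj] at h5
  exact hqc (sub_right_injective h5)

open Polynomial in
lemma polarD_step (p : ℂ[X]) (m : ℕ) (c q : ℂ) (hp : p.natDegree = m + 1) (hq : q.re = 0)
    (hqc : q ≠ c) (hc : c.re = 0) (h : ∀ z, p.eval z = 0 → z.re < 0 ∨ z = c) :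
    (polarD (m + 1) q p).natDegree = m ∧ polarD (m + 1) q p ≠ 0 ∧
      ∀ z, (polarD (m + 1) q p).eval z = 0 → z.re < 0 ∨ z = c := by
  have hp0 : p ≠ 0 := by rintro rfl; simp at hp
  have hsp : p.Splits := IsAlgClosed.splits p
  have hcard : p.roots.card = m + 1 := by rw [← hsp.natDegree_eq_card_roots, hp]
  have hroots : ∀ r ∈ p.roots, r.re < 0 ∨ r = c := fun r hr => h r (isRoot_of_mem_roots hr)
  have hcoeff : ∀ k, (polarD (m + 1) q p).coeff (k + 1) =
      (m + 1) * p.coeff (k + 1) + q * (p.coeff (k + 2) * (k + 2)) - p.coeff (k + 1) * (k + 1) := by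
    intro k
    rw [polarD_apply, sub_mul, coeff_add, coeff_sub, coeff_C_mul, coeff_C_mul, coeff_X_mul,
      coeff_derivative, coeff_derivative]
    push_cast
    ring
  have hcoeff0 : (polarD (m + 1) q p).coeff 0 = (m + 1) * p.coeff 0 + q * p.coeff 1 := by
    rw [polarD_apply, sub_mul, coeff_add, coeff_sub, coeff_C_mul, coeff_C_mul, coeff_X_mul_zero,
      coeff_derivative]
    push_cast
    ring
  have hcm : (polarD (m + 1) q p).coeff m = p.coeff m + (m + 1) * q * p.coeff (m + 1) := by
    cases m with
    | zero => rw [hcoeff0]; push_cast; ring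
    | succ k => rw [hcoeff]; push_cast; ring
  have hle : (polarD (m + 1) q p).natDegree ≤ m := by
    rw [natDegree_le_iff_coeff_eq_zero]
    intro N hN
    obtain ⟨k, rfl⟩ : ∃ k, N = k + 1 := ⟨N - 1, by omega⟩
    rw [hcoeff, coeff_eq_zero_of_natDegree_lt (n := k + 2) (by omega)]
    rcases Nat.lt_or_ge m k with hk | hk
    · rw [coeff_eq_zero_of_natDegree_lt (n := k + 1) (by omega)]; ring
    · obtain rfl : k = m := by omega
      ring
  have hlead : p.coeff (m + 1) ≠ 0 := by
    rw [← hp]; simpa using hp0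
  have hne : (polarD (m + 1) q p).coeff m ≠ 0 := by
    rw [hcm]
    have h1 := hsp.nextCoeff_eq_neg_sum_roots_mul_leadingCoeff
    rw [nextCoeff_of_natDegree_pos (by omega), leadingCoeff, hp, Nat.add_sub_cancel] at h1
    rw [h1]
    intro e
    apply center_ne p.roots c q (by omega) hq hqc hc hroots
    rw [hcard]
    apply mul_left_cancel₀ hlead
    push_cast
    linear_combination -e
  refine ⟨le_antisymm hle (le_natDegree_of_ne_zero hne), fun e => hne (by simp [e]), ?_⟩
  intro z hz
  by_contra hcon
  push Not at hcon
  obtain ⟨hz0, hzc⟩ := hcon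
  have hpz : p.eval z ≠ 0 := by
    intro e
    rcases h z e with h | h
    · linarith
    · exact hzc h
  rw [polarD_apply] at hz
  simp only [eval_add, eval_mul, eval_C, eval_sub, eval_X] at hz
  have hzq : z ≠ q := by
    rintro rfl
    simp only [sub_self, zero_mul, add_zero, mul_eq_zero, hpz, or_false] at hz
    exact absurd hz (by exact_mod_cast Nat.succ_ne_zero m)
  apply center_inv_ne p.roots c q z (by omega) hq hqc hc hz0 hzc hzq hroots
  rw [← hsp.eval_derivative_div_eval_of_ne_zero hpz, hcard]
  have := sub_ne_zero.2 hzq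
  field_simp
  linear_combination -hz

open Polynomial in
lemma iterD_ne (qs : List ℂ) (c : ℂ) (hc : c.re = 0) (hq : ∀ q ∈ qs, q.re = 0 ∧ q ≠ c) :
    ∀ p : ℂ[X], p ≠ 0 → p.natDegree = qs.length →
      (∀ z, p.eval z = 0 → z.re < 0 ∨ z = c) → (iterD qs p).eval 0 ≠ 0 := by
  induction qs with
  | nil =>
    intro p hp hd _
    rw [List.length_nil] at hd
    rw [eq_C_of_natDegree_eq_zero hd] at hp ⊢
    simpa [iterD] using hp
  | cons q qs ih =>
    intro p hp hd h
    obtain ⟨h1, h2, h3⟩ := polarD_step p qs.length c q hd (hq q (by simp)).1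
      (hq q (by simp)).2 hc h
    exact ih (fun q hq' => hq q (by simp [hq'])) _ h2 h1 h3

open Polynomial in
lemma span_lemma (T : ℂ[X] →ₗ[ℂ] ℂ) (n : ℕ) (h : ∀ a : ℂ, T ((X - C a) ^ n) = 0)
    (P : ℂ[X]) (hP : P.natDegree ≤ n) : T P = 0 := by
  have hk : ∀ k ≤ n, T (X ^ k) = 0 := by
    let R : ℂ[X] := ∑ k ∈ Finset.range (n + 1), C (T (X ^ k) * (n.choose k : ℂ)) * X ^ (n - k)
    have hR : R = 0 := by
      apply Polynomial.funext
      intro a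
      have := h (-a)
      rw [map_neg, sub_neg_eq_add, add_pow, map_sum] at this
      rw [eval_zero, ← this, eval_finsetSum]
      refine Finset.sum_congr rfl fun k _ => ?_
      have e : (X : ℂ[X]) ^ k * C a ^ (n - k) * (n.choose k : ℂ[X])
          = (a ^ (n - k) * (n.choose k : ℂ)) • X ^ k := by
        rw [Polynomial.smul_eq_C_mul]
        simp only [map_mul, map_pow, map_natCast]
        ring
      rw [e, map_smul]
      simp only [eval_mul, eval_C, eval_pow, eval_X, smul_eq_mul]
      ring
    intro k hk
    have h1 : R.coeff (n - k) = T (X ^ k) * (n.choose k : ℂ) := by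
      simp only [R, finsetSum_coeff, coeff_C_mul, coeff_X_pow]
      rw [Finset.sum_eq_single k]
      · simp
      · intro b hb hbk
        rw [Finset.mem_range] at hb
        rw [if_neg (by omega), mul_zero]
      · intro hb
        exact absurd (Finset.mem_range.2 (by omega)) hb
    rw [hR, coeff_zero] at h1
    have h2 : (n.choose k : ℂ) ≠ 0 := by
      exact_mod_cast (Nat.choose_pos hk).ne'
    exact (mul_eq_zero.1 h1.symm).resolve_right h2
  rw [P.as_sum_range_C_mul_X_pow, map_sum]
  refine Finset.sum_eq_zero fun k hk' => ?_
  rw [Finset.mem_range] at hk'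
  rw [← Polynomial.smul_eq_C_mul, map_smul, hk k (by omega), smul_zero]

open Polynomial in
lemma main_aux (c : ℂ) (hc : c.re = 0) (hcn : ∀ n : ℕ, 0 < n → (c + 1) ^ n ≠ (c - 1) ^ n) (P : ℂ[X])
    (hP : 0 < P.natDegree) (he : P.eval (-1) = P.eval 1) :
    ∃ z : ℂ, (0 ≤ z.re ∧ z ≠ c) ∧ P.derivative.eval z = 0 := by
  by_contra hcon
  push Not at hcon
  obtain ⟨m, hm⟩ : ∃ m, P.natDegree = m + 1 := ⟨P.natDegree - 1, by omega⟩
  set Q : ℂ[X] := (X + C 1) ^ (m + 1) - (X + C (-1)) ^ (m + 1) with hQ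
  have hQc : Q.coeff m ≠ 0 := by
    rw [hQ, coeff_sub, coeff_X_add_C_pow, coeff_X_add_C_pow]
    have : (m : ℂ) + 1 ≠ 0 := by exact_mod_cast Nat.succ_ne_zero m
    simp only [Nat.add_sub_cancel_left, Nat.choose_succ_self_right]
    push_cast
    intro e
    apply this
    linear_combination e / 2
  have hQd : Q.natDegree = m := by
    apply le_antisymm _ (le_natDegree_of_ne_zero hQc)
    rw [natDegree_le_iff_coeff_eq_zero]
    intro N hN
    rw [hQ, coeff_sub, coeff_X_add_C_pow, coeff_X_add_C_pow]
    rcases Nat.lt_or_ge (m + 1) N with h | h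
    · simp [Nat.choose_eq_zero_of_lt h]
    · obtain rfl : N = m + 1 := by omega
      simp
  have hQ0 : Q ≠ 0 := fun e => hQc (by simp [e])
  have hsp : Q.Splits := IsAlgClosed.splits Q
  set qs := Q.roots.toList with hqs
  have hlen : qs.length = m := by
    rw [hqs, Multiset.length_toList, ← hsp.natDegree_eq_card_roots, hQd]
  have hq : ∀ q ∈ qs, q.re = 0 ∧ q ≠ c := by
    intro q hq
    rw [hqs, Multiset.mem_toList] at hq
    have h1 : Q.eval q = 0 := isRoot_of_mem_roots hq
    simp only [hQ, eval_sub, eval_pow, eval_add, eval_X, eval_C, sub_eq_zero] at h1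
    constructor
    · have h2 : ‖q + 1‖ = ‖q + -1‖ := by
        have := congrArg norm h1
        rw [norm_pow, norm_pow] at this
        exact (pow_left_inj₀ (norm_nonneg _) (norm_nonneg _) (Nat.succ_ne_zero m)).1 this
      have h3 : Complex.normSq (q + 1) = Complex.normSq (q + -1) := by
        rw [Complex.normSq_eq_norm_sq, Complex.normSq_eq_norm_sq, h2]
      simp [Complex.normSq_apply] at h3
      linarith
    · rintro rfl
      exact hcn (m + 1) (Nat.succ_pos m) (by rw [h1, sub_eq_add_neg])
  have hd : P.derivative.natDegree = m := by
    rw [natDegree_derivative, hm, Nat.add_sub_cancel]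
  have hd0 : P.derivative ≠ 0 := by
    intro e
    have := derivative_eq_zero.1 e
    omega
  have hne := iterD_ne qs c hc hq P.derivative hd0 (by rw [hd, hlen]) (by
    intro z hz
    by_contra h
    push Not at h
    exact hcon z h hz)
  let T : ℂ[X] →ₗ[ℂ] ℂ :=
    Q.leadingCoeff • (Polynomial.leval 0 ∘ₗ iterD qs ∘ₗ Polynomial.derivative)
      - ((m + 1).factorial : ℂ) • (Polynomial.leval 1 - Polynomial.leval (-1))
  have hT : T P = 0 := by
    refine span_lemma T (m + 1) (fun a => ?_) P hm.le
    have h1 : derivative ((X - C a) ^ (m + 1)) = ((m + 1 : ℕ) : ℂ) • (X - C a) ^ qs.length := by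
      rw [derivative_X_sub_C_pow, hlen, Polynomial.smul_eq_C_mul]
      simp
    have h2 := hsp.eval_eq_prod_roots a
    have h3 : (Q.roots.map (fun x => a - x)).prod = (-1) ^ m * (qs.map (fun q => q - a)).prod := by
      rw [← hlen]
      have : Q.roots = (qs : Multiset ℂ) := by rw [hqs, Multiset.coe_toList]
      rw [this, Multiset.map_coe, Multiset.prod_coe]
      clear_value qs
      clear * -
      induction qs with
      | nil => simp
      | cons q qs ih =>
        simp only [List.map_cons, List.prod_cons, ih, List.length_cons]
        ring
    rw [h3] at h2
    simp only [hQ, eval_sub, eval_pow, eval_add, eval_X, eval_C] at h2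
    rw [← hQ] at h2
    have hi := iterD_pow qs a
    rw [hlen] at hi h1
    simp only [T, LinearMap.sub_apply, LinearMap.smul_apply, LinearMap.comp_apply, h1, map_smul,
      hi, leval_apply, eval_C, eval_pow, eval_sub, eval_X, smul_eq_mul]
    have h4 : (1 - a) ^ (m + 1) = (-1) ^ (m + 1) * (a + -1) ^ (m + 1) := by
      rw [← mul_pow]; congr 1; ring
    have h5 : (-1 - a) ^ (m + 1) = (-1) ^ (m + 1) * (a + 1) ^ (m + 1) := by
      rw [← mul_pow]; congr 1; ring
    have h6 : ((-1 : ℂ) ^ m) * (-1) ^ m = 1 := by rw [← mul_pow]; simp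
    rw [h4, h5, Nat.factorial_succ]
    push_cast
    have e1 : (-1 : ℂ) ^ (m + 1) * (a + -1) ^ (m + 1) - (-1) ^ (m + 1) * (a + 1) ^ (m + 1)
        = Q.leadingCoeff * (qs.map (fun q => q - a)).prod := by
      rw [pow_succ (-1 : ℂ) m]
      linear_combination (-1) ^ m * h2 + Q.leadingCoeff * (qs.map (fun q => q - a)).prod * h6
    rw [e1]
    ring
  simp only [T, LinearMap.sub_apply, LinearMap.smul_apply, LinearMap.comp_apply, leval_apply,
    smul_eq_mul, he, sub_self, mul_zero, sub_zero, mul_eq_zero] at hT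
  rcases hT with h | h
  · exact hQ0 (leadingCoeff_eq_zero.1 h)
  · exact hne h

lemma cot_aux (α : ℝ) (hα : Irrational α) (n : ℕ) (hn : 0 < n) :
    (Complex.I * (Real.cot (α * Real.pi) : ℂ) + 1) ^ n
      ≠ (Complex.I * (Real.cot (α * Real.pi) : ℂ) - 1) ^ n := by
  intro h
  have hs : Real.sin (α * Real.pi) ≠ 0 := by
    rw [Ne, Real.sin_eq_zero_iff]
    rintro ⟨k, hk⟩
    have : (k : ℝ) = α := mul_right_cancel₀ Real.pi_ne_zero hk
    exact hα ⟨k, by simpa using this⟩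
  set θ := α * Real.pi with hθ
  have hsc : (Real.sin θ : ℂ) ≠ 0 := by exact_mod_cast hs
  have hcot : (Real.cot θ : ℂ) = Real.cos θ / Real.sin θ := by
    rw [Real.cot_eq_cos_div_sin]; push_cast; rfl
  have hI := Complex.I_mul_I
  have e0 := Complex.exp_mul_I (θ : ℂ)
  have e0' := Complex.exp_mul_I (-θ : ℂ)
  rw [Complex.cos_neg, Complex.sin_neg] at e0'
  rw [← Complex.ofReal_cos, ← Complex.ofReal_sin] at e0 e0'
  have e1 : Complex.I * (Real.cot θ : ℂ) + 1 =
      (Complex.I / Real.sin θ) * Complex.exp (-θ * Complex.I) := by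
    rw [hcot, e0']; field_simp; linear_combination (Real.sin θ : ℂ) * hI
  have e2 : Complex.I * (Real.cot θ : ℂ) - 1 =
      (Complex.I / Real.sin θ) * Complex.exp (θ * Complex.I) := by
    rw [hcot, e0]; field_simp; linear_combination -(Real.sin θ : ℂ) * hI
  rw [e1, e2, mul_pow, mul_pow] at h
  have h2 := mul_left_cancel₀ (pow_ne_zero n (div_ne_zero Complex.I_ne_zero hsc)) h
  rw [← Complex.exp_nat_mul, ← Complex.exp_nat_mul, Complex.exp_eq_exp_iff_exists_int] at h2
  obtain ⟨k, hk⟩ := h2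
  have hpi : (Real.pi : ℂ) ≠ 0 := by exact_mod_cast Real.pi_ne_zero
  have h3 : (n : ℂ) * (α : ℂ) = -k := by
    rw [hθ] at hk
    push_cast at hk
    have hne : (2 * Real.pi * Complex.I : ℂ) ≠ 0 := by simp [hpi]
    apply mul_left_cancel₀ hne
    linear_combination -hk
  have h4 : (n : ℝ) * α = -k := by exact_mod_cast h3
  apply hα
  refine ⟨-k / n, ?_⟩
  have : (n : ℝ) ≠ 0 := by exact_mod_cast hn.ne'
  push_cast
  rw [← h4]
  field_simp

lemma I_mul_re (x : ℝ) : (Complex.I * (x : ℂ)).re = 0 := by simp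

lemma part_one (α : ℝ) (hα : Irrational α) :
    IsRollesDomain ({z : ℂ | 0 ≤ z.re} \ {Complex.I * (Real.cot (α * Real.pi) : ℂ)}) := by
  intro P hP he
  obtain ⟨z, ⟨h1, h2⟩, h3⟩ := main_aux (Complex.I * (Real.cot (α * Real.pi) : ℂ)) (I_mul_re _)
    (fun n hn => cot_aux α hα n hn) P hP he
  exact ⟨z, ⟨h1, h2⟩, h3⟩

theorem half_plane_minus_point_is_rolles_domain :
    (∀ α : ℝ, Irrational α → 0 < α → α < 1 →
      IsRollesDomain ({z : ℂ | 0 ≤ z.re} \ {Complex.I * (Real.cot (α * Real.pi) : ℂ)}))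
    ∧ ¬ IsMinimalRollesDomain {z : ℂ | 0 ≤ z.re} := by
  refine ⟨fun α hα _ _ => part_one α hα, ?_⟩
  rintro ⟨-, h⟩
  refine h _ ?_ (part_one (√2) irrational_sqrt_two)
  refine ⟨Set.sdiff_subset, fun hsub => ?_⟩
  have : Complex.I * (Real.cot (√2 * Real.pi) : ℂ) ∈ {z : ℂ | 0 ≤ z.re} :=
    (I_mul_re _).ge
  exact (hsub this).2 rfl
end

section
/- If S is a subset of the closed right half-plane H = {z ∈ ℂ : Re(z) ≥ 0} and S is a Rolle's domain, then S contains the set {z ∈ ℂ : Re(z) > 0} ∪ I, where I = {i·cot(kπ/n) : n ≥ 2 and 1 ≤ k < n, with n, k integers}. -/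
open Polynomial Filter Topology in
theorem rolles_aux_open (S : Set ℂ) (hS : S ⊆ {z : ℂ | 0 ≤ z.re}) (hR : IsRollesDomain S)
    (z0 : ℂ) (hz : 0 < z0.re) : z0 ∈ S := by
  obtain ⟨a, ha⟩ : ∃ a, a = 1 - z0 := ⟨_, rfl⟩
  obtain ⟨b, hb⟩ : ∃ b, b = -1 - z0 := ⟨_, rfl⟩
  have hb0 : b ≠ 0 := by
    intro h
    have := congrArg Complex.re (hb.symm.trans h)
    simp at this
    linarith
  have hlt : ‖a‖ < ‖b‖ := by
    have h : ‖a‖ ^ 2 < ‖b‖ ^ 2 := by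
      rw [Complex.sq_norm, Complex.sq_norm, Complex.normSq_apply, Complex.normSq_apply, ha, hb]
      simp
      nlinarith
    exact lt_of_pow_lt_pow_left₀ 2 (norm_nonneg _) h
  obtain ⟨r, hr⟩ : ∃ r, r = a / b := ⟨_, rfl⟩
  have har : a = r * b := by rw [hr]; field_simp
  have hr1 : ‖r‖ < 1 := by
    rw [hr, norm_div, div_lt_one (norm_pos_iff.mpr hb0)]; exact hlt
  have hp : Tendsto (fun n : ℕ => r ^ n) atTop (𝓝 0) := tendsto_pow_atTop_nhds_zero_of_norm_lt_one hr1
  have hp1 : Tendsto (fun n : ℕ => r ^ (n + 1)) atTop (𝓝 0) := hp.comp (tendsto_add_atTop_nat 1)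
  have hf : Tendsto (fun n : ℕ => (n : ℂ) / (n + 1)) atTop (𝓝 1) :=
    tendsto_natCast_div_add_atTop (1 : ℂ)
  have hc : Tendsto (fun n : ℕ => z0 + (n : ℂ) / (n + 1) * (b * (1 - r ^ (n + 1)) / (1 - r ^ n)))
      atTop (𝓝 (z0 + 1 * (b * (1 - 0) / (1 - 0)))) :=
    (hf.mul (((hp1.const_sub 1).const_mul b).div (hp.const_sub 1) (by simp))).const_add z0
  have hcre := (Complex.continuous_re.tendsto _).comp hc
  have hev := hcre.eventually_lt_const (u := 0) (by rw [hb]; simp)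
  obtain ⟨n, hn, hn1⟩ := (hev.and (eventually_ge_atTop 1)).exists
  simp only [Function.comp] at hn
  obtain ⟨c, hcd⟩ : ∃ c, c = (n : ℂ) / (n + 1) * (b * (1 - r ^ (n + 1)) / (1 - r ^ n)) := ⟨_, rfl⟩
  rw [← hcd] at hn
  have hrn : 1 - r ^ n ≠ 0 := by
    intro h
    have h1 : r ^ n = 1 := (sub_eq_zero.mp h).symm
    have h2 := pow_lt_one₀ (norm_nonneg r) hr1 (by omega : n ≠ 0)
    rw [← norm_pow, h1] at h2
    simp at h2
  have hn0 : (n : ℂ) ≠ 0 := by exact_mod_cast (by omega : n ≠ 0)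
  have hn0' : (n : ℂ) + 1 ≠ 0 := by exact_mod_cast (by omega : n + 1 ≠ 0)
  let P : ℂ[X] := C (1 / ((n : ℂ) + 1)) * (X - C z0) ^ (n + 1) - C (c / n) * (X - C z0) ^ n
  have hev : ∀ z, P.derivative.eval z = (z - z0) ^ (n - 1) * (z - (z0 + c)) := by
    intro z
    obtain ⟨m, rfl⟩ : ∃ m, n = m + 1 := ⟨n - 1, by omega⟩
    simp only [P, derivative_sub, derivative_C_mul, derivative_X_sub_C_pow, eval_sub, eval_mul,
      eval_C, eval_pow, eval_X, Nat.add_sub_cancel]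
    push_cast at hn0 hn0' ⊢
    field_simp
    ring
  have hdeg : 0 < P.natDegree := by
    by_contra h
    have h0 : P.natDegree = 0 := by omega
    have h1 := derivative_of_natDegree_zero h0
    have h2 := hev (z0 + c + z0 + 1 - z0 + (‖c‖ : ℂ))
    rw [h1, eval_zero] at h2
    rcases mul_eq_zero.mp h2.symm with h3 | h3
    · have h4 := congrArg Complex.re (not_imp_not.mp (pow_ne_zero (n - 1)) h3)
      simp at h4
      have := Complex.abs_re_le_norm c
      have := neg_abs_le c.re
      linarith
    · have h4 := congrArg Complex.re h3
      simp at h4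
      have := norm_nonneg c
      linarith
  have heq : P.eval (-1) = P.eval 1 := by
    simp only [P, eval_sub, eval_mul, eval_C, eval_pow, eval_X]
    rw [← ha, ← hb, har, hcd]
    field_simp
    ring
  obtain ⟨z, hzS, hz'⟩ := hR P hdeg heq
  rw [hev] at hz'
  rcases mul_eq_zero.mp hz' with h | h
  · have h5 : z - z0 = 0 := not_imp_not.mp (pow_ne_zero (n - 1)) h
    rw [← sub_eq_zero.mp h5]
    exact hzS
  · have h1 := hS hzS
    rw [sub_eq_zero.mp h] at h1
    simp only [Set.mem_setOf_eq] at h1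
    linarith

open Polynomial in
theorem rolles_aux_cot (S : Set ℂ) (hR : IsRollesDomain S) (n k : ℕ) (hn : 2 ≤ n) (hk : 1 ≤ k)
    (hkn : k < n) : Complex.I * (Real.cot (k * Real.pi / n) : ℂ) ∈ S := by
  obtain ⟨t, ht⟩ : ∃ t : ℝ, t = k * Real.pi / n := ⟨_, rfl⟩
  rw [← ht]
  have hn0 : (0 : ℝ) < n := by exact_mod_cast (by omega : 0 < n)
  have hk0 : (0 : ℝ) < k := by exact_mod_cast (by omega : 0 < k)
  have hkn' : (k : ℝ) < n := by exact_mod_cast hkn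
  have hpi := Real.pi_pos
  have hs : Real.sin t ≠ 0 := by
    apply ne_of_gt
    apply Real.sin_pos_of_pos_of_lt_pi
    · rw [ht]; positivity
    · rw [ht, div_lt_iff₀ hn0]; nlinarith
  have hs' : Complex.sin t ≠ 0 := by
    rw [← Complex.ofReal_sin]; exact_mod_cast hs
  obtain ⟨w, hw⟩ : ∃ w : ℂ, w = Complex.I * (Real.cot t : ℂ) := ⟨_, rfl⟩
  rw [← hw]
  have hwe : w = Complex.I * (Complex.cos t / Complex.sin t) := by
    rw [hw, Real.cot_eq_cos_div_sin]; push_cast; rfl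
  have hrel : 1 - w = Complex.exp (2 * (t * Complex.I)) * (-1 - w) := by
    rw [two_mul, Complex.exp_add, Complex.exp_mul_I, hwe]
    have h1 := Complex.sin_sq_add_cos_sq (t : ℂ)
    have hI := Complex.I_sq
    field_simp
    generalize Complex.sin t = s at *
    generalize Complex.cos t = c at *
    grind
  have hexp : Complex.exp (2 * (t * Complex.I)) ^ n = 1 := by
    rw [← Complex.exp_nat_mul, Complex.exp_eq_one_iff]
    refine ⟨k, ?_⟩
    have hnc : (n : ℂ) ≠ 0 := by exact_mod_cast (by omega : n ≠ 0)
    rw [ht]; push_cast; field_simp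
  obtain ⟨z, hzS, hz⟩ := hR ((X - C w) ^ n) (by simp [natDegree_pow]; omega) (by
    simp only [eval_pow, eval_sub, eval_X, eval_C]
    rw [hrel, mul_pow, hexp, one_mul])
  rw [derivative_X_sub_C_pow] at hz
  simp only [eval_mul, eval_pow, eval_sub, eval_X, eval_C] at hz
  rcases mul_eq_zero.mp hz with h | h
  · have : n = 0 := by exact_mod_cast h
    omega
  · rw [← sub_eq_zero.mp (pow_eq_zero_iff (by omega) |>.mp h)]
    exact hzS

theorem rolles_subset_of_half_plane_contains
    (S : Set ℂ) (hS : S ⊆ {z : ℂ | 0 ≤ z.re}) (hR : IsRollesDomain S) :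
    {z : ℂ | 0 < z.re} ∪
      {z : ℂ | ∃ n k : ℕ, 2 ≤ n ∧ 1 ≤ k ∧ k < n ∧
        z = Complex.I * (Real.cot (k * Real.pi / n) : ℂ)} ⊆ S := by
  rintro z (hz | ⟨n, k, hn, hk, hkn, rfl⟩)
  · exact rolles_aux_open S hS hR z hz
  · exact rolles_aux_cot S hR n k hn hk hkn
end

section
/- If S ⊆ ℂ is a Rolle's domain, then for every ζ ∈ ℂ with Re(ζ) > 0, S contains ζ or S contains -1/(3ζ). -/
theorem rolles_domain_contains_or (S : Set ℂ) (hS : IsRollesDomain S)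
    (ζ : ℂ) (hζ : 0 < ζ.re) : ζ ∈ S ∨ (-1 / (3 * ζ)) ∈ S := by
  have h0 : ζ ≠ 0 := by
    rintro rfl
    simp at hζ
  have hη : ζ * (-1 / (3 * ζ)) = -1 / 3 := by field_simp
  generalize -1 / (3 * ζ) = η at hη
  obtain ⟨z, hz, hd⟩ := hS
    (Polynomial.X ^ 3 + Polynomial.C (-3 / 2 * (ζ + η)) * Polynomial.X ^ 2 - Polynomial.X)
    (by
      have : (Polynomial.X ^ 3 + Polynomial.C (-3 / 2 * (ζ + η)) * Polynomial.X ^ 2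
          - Polynomial.X : Polynomial ℂ).natDegree = 3 := by
        compute_degree!
      omega)
    (by
      simp only [Polynomial.eval_sub, Polynomial.eval_add, Polynomial.eval_mul,
        Polynomial.eval_pow, Polynomial.eval_X, Polynomial.eval_C]
      ring)
  have h : (2 + 1) * z ^ 2 + (-3 / 2 * (ζ + η)) * ((1 + 1) * z) - 1 = 0 := by
    simpa [-map_mul, -map_add, Polynomial.derivative_X_pow] using hd
  have h2 : (z - ζ) * (z - η) = 0 := by linear_combination h / 3 + hη
  rcases mul_eq_zero.mp h2 with h3 | h3
  · left
    rwa [← sub_eq_zero.mp h3]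
  · right
    rwa [← sub_eq_zero.mp h3]
end

section
/- For every ε > 0 there exists N such that for every integer n ≥ N there is a complex number ζ with Re(ζ) > 1, |Im(ζ)| < ε, and ∫_{-1}^{1} (w + 1)^n (w - ζ)^5 dw = 0, where the integral is taken along the real segment from -1 to 1. -/
open Polynomial Filter Topology

lemma near_root (p : ℂ[X]) (hp : p.Monic) (r : ℂ) (c : ℝ) (hc : 0 < c)
    (h : ‖p.eval r‖ < c ^ p.natDegree) : ∃ z, p.eval z = 0 ∧ ‖r - z‖ < c := by
  by_contra! H
  have hs := IsAlgClosed.splits p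
  have h1 : p.eval r = (p.roots.map (fun a => r - a)).prod := by
    conv_lhs => rw [hs.eq_prod_roots_of_monic hp]
    simp [eval_multiset_prod]
  have key : ∀ s : Multiset ℂ, (∀ a ∈ s, c ≤ ‖r - a‖) →
      c ^ s.card ≤ ‖(s.map (fun a => r - a)).prod‖ := by
    intro s
    induction s using Multiset.induction with
    | empty => simp
    | cons a s ih =>
      intro hh
      simp only [Multiset.card_cons, Multiset.map_cons, Multiset.prod_cons, norm_mul, pow_succ']
      exact mul_le_mul (hh a (by simp)) (ih fun b hb => hh b (by simp [hb])) (by positivity)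
        (by positivity)
  have := key p.roots (fun a ha => H a (by
    have := isRoot_of_mem_roots ha
    exact this))
  rw [← h1, ← hs.natDegree_eq_card_roots] at this
  linarith

lemma near_root5 (a b c d e r : ℂ) (t : ℝ) (ht : 0 < t)
    (h : ‖r^5 - a*r^4 + b*r^3 - c*r^2 + d*r - e‖ < t ^ 5) :
    ∃ z : ℂ, z^5 - a*z^4 + b*z^3 - c*z^2 + d*z - e = 0 ∧ ‖r - z‖ < t := by
  set p : ℂ[X] := X^5 - C a*X^4 + C b*X^3 - C c*X^2 + C d*X - C e with hp
  have hd : p.natDegree = 5 := by rw [hp]; compute_degree!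
  have hm : p.Monic := by rw [hp]; monicity!
  obtain ⟨z, hz, hz2⟩ := near_root p hm r t ht (by rw [hd]; simpa [hp] using h)
  exact ⟨z, by simpa [hp] using hz, hz2⟩

lemma integral_eq (n : ℕ) (ζ : ℂ) :
    (∫ w : ℝ in (-1 : ℝ)..1, ((w : ℂ) + 1) ^ n * ((w : ℂ) - ζ) ^ 5) =
      2^(n+1)*(1-ζ)^5/(n+1) - 5*2^(n+2)*(1-ζ)^4/((n+1)*(n+2))
      + 20*2^(n+3)*(1-ζ)^3/((n+1)*(n+2)*(n+3)) - 60*2^(n+4)*(1-ζ)^2/((n+1)*(n+2)*(n+3)*(n+4))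
      + 120*2^(n+5)*(1-ζ)/((n+1)*(n+2)*(n+3)*(n+4)*(n+5))
      - 120*2^(n+6)/((n+1)*(n+2)*(n+3)*(n+4)*(n+5)*(n+6)) := by
  have k1 : (n:ℂ)+1 ≠ 0 := by exact_mod_cast (by omega : n+1 ≠ 0)
  have k2 : (n:ℂ)+2 ≠ 0 := by exact_mod_cast (by omega : n+2 ≠ 0)
  have k3 : (n:ℂ)+3 ≠ 0 := by exact_mod_cast (by omega : n+3 ≠ 0)
  have k4 : (n:ℂ)+4 ≠ 0 := by exact_mod_cast (by omega : n+4 ≠ 0)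
  have k5 : (n:ℂ)+5 ≠ 0 := by exact_mod_cast (by omega : n+5 ≠ 0)
  have k6 : (n:ℂ)+6 ≠ 0 := by exact_mod_cast (by omega : n+6 ≠ 0)
  have T : ∀ (k j : ℕ) (C w : ℂ), HasDerivAt (fun w : ℂ => C * ((w+1)^(n+(k+1)) * (w-ζ)^j))
      (C * (((n+(k+1) : ℕ):ℂ) * (w+1)^(n+k) * (w-ζ)^j + (w+1)^(n+(k+1)) * (j * (w-ζ)^(j-1)))) w := by
    intro k j C w
    have h1 : HasDerivAt (fun w : ℂ => (w+1)^(n+(k+1))) _ w := ((hasDerivAt_id w).add_const 1).pow _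
    have h2 : HasDerivAt (fun w : ℂ => (w-ζ)^j) _ w := ((hasDerivAt_id w).sub_const ζ).pow _
    refine ((h1.mul h2).const_mul C).congr_deriv ?_
    simp [← add_assoc]
  set C0 : ℂ := 1/(n+1)
  set C1 : ℂ := -5/((n+1)*(n+2))
  set C2 : ℂ := 20/((n+1)*(n+2)*(n+3))
  set C3 : ℂ := -60/((n+1)*(n+2)*(n+3)*(n+4))
  set C4 : ℂ := 120/((n+1)*(n+2)*(n+3)*(n+4)*(n+5))
  set C5 : ℂ := -120/((n+1)*(n+2)*(n+3)*(n+4)*(n+5)*(n+6))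
  have hG : ∀ w : ℂ, HasDerivAt (fun w : ℂ => C0 * ((w+1)^(n+(0+1)) * (w-ζ)^5) +
     C1 * ((w+1)^(n+(1+1)) * (w-ζ)^4) + C2 * ((w+1)^(n+(2+1)) * (w-ζ)^3)
     + C3 * ((w+1)^(n+(3+1)) * (w-ζ)^2) + C4 * ((w+1)^(n+(4+1)) * (w-ζ)^1)
     + C5 * ((w+1)^(n+(5+1)) * (w-ζ)^0)) ((w+1)^n*(w-ζ)^5) w := by
    intro w
    refine ((((((T 0 5 C0 w).add (T 1 4 C1 w)).add (T 2 3 C2 w)).add (T 3 2 C3 w)).add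
      (T 4 1 C4 w)).add (T 5 0 C5 w)).congr_deriv ?_
    simp only [C0, C1, C2, C3, C4, C5]
    push_cast
    norm_num
    field_simp
    ring
  have := intervalIntegral.integral_eq_sub_of_hasDerivAt (a := -1) (b := 1)
    (fun x _ => (hG (x:ℝ)).comp_ofReal)
    (Continuous.intervalIntegrable (by fun_prop) _ _)
  rw [this]
  simp only [C0, C1, C2, C3, C4, C5]
  push_cast
  norm_num
  ring

lemma lim_ratio (k : ℝ) : Tendsto (fun n : ℕ => ((n:ℝ)+1)/((n:ℝ)+k)) atTop (𝓝 1) := by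
  have h0 : Tendsto (fun n : ℕ => (n:ℝ)+k) atTop atTop :=
    tendsto_atTop_add_const_right _ _ tendsto_natCast_atTop_atTop
  have h1 : Tendsto (fun n : ℕ => 1 + (1-k)/((n:ℝ)+k)) atTop (𝓝 (1+0)) :=
    tendsto_const_nhds.add (h0.const_div_atTop _)
  rw [add_zero] at h1
  refine h1.congr' ?_
  filter_upwards [h0.eventually_gt_atTop 0] with n hn
  field_simp
  ring

lemma lim_ratioC (k : ℝ) : Tendsto (fun n : ℕ => ((n:ℂ)+1)/((n:ℂ)+(k:ℂ))) atTop (𝓝 1) := by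
  have := (Complex.continuous_ofReal.tendsto 1).comp (lim_ratio k)
  simpa [Function.comp_def] using this

theorem exists_root_near_one :
    ∀ ε : ℝ, 0 < ε → ∃ N : ℕ, ∀ n : ℕ, N ≤ n →
      ∃ ζ : ℂ, 1 < ζ.re ∧ |ζ.im| < ε ∧
        (∫ w : ℝ in (-1 : ℝ)..1, ((w : ℂ) + 1) ^ n * ((w : ℂ) - ζ) ^ 5) = 0 := by
  intro ε hε
  let r : ℂ := ⟨-0.239806, 3.128335⟩
  let u : ℝ → ℕ → ℂ := fun k n => ((n:ℂ)+1)/((n:ℂ)+(k:ℂ))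
  have hu : ∀ k, Tendsto (u k) atTop (𝓝 1) := lim_ratioC
  have hL : Tendsto (fun n => ‖r^5 - (5*u 2 n)*r^4 + (20*(u 2 n*u 3 n))*r^3
      - (60*(u 2 n*u 3 n*u 4 n))*r^2 + (120*(u 2 n*u 3 n*u 4 n*u 5 n))*r
      - 120*(u 2 n*u 3 n*u 4 n*u 5 n*u 6 n)‖) atTop
      (𝓝 ‖r^5 - (5*1)*r^4 + (20*(1*1))*r^3
      - (60*(1*1*1))*r^2 + (120*(1*1*1*1))*r
      - 120*(1*1*1*1*1)‖) := by
    have c2 := (hu 2)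
    have c3 := c2.mul (hu 3)
    have c4 := c3.mul (hu 4)
    have c5 := c4.mul (hu 5)
    have c6 := c5.mul (hu 6)
    exact ((((((tendsto_const_nhds.sub ((c2.const_mul 5).mul_const _))).add
      ((c3.const_mul 20).mul_const _)).sub ((c4.const_mul 60).mul_const _)).add
      ((c5.const_mul 120).mul_const _)).sub (c6.const_mul 120)).norm
  have hr : ‖r^5 - (5*1)*r^4 + (20*(1*1))*r^3
      - (60*(1*1*1))*r^2 + (120*(1*1*1*1))*r
      - 120*(1*1*1*1*1)‖ < (0.23:ℝ)^5 := by
    refine lt_of_le_of_lt (Complex.norm_le_abs_re_add_abs_im _) ?_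
    simp only [r, pow_succ, pow_zero, one_mul, mul_one, Complex.add_re, Complex.sub_re,
      Complex.mul_re, Complex.mul_im, Complex.add_im, Complex.sub_im, Complex.re_ofNat,
      Complex.im_ofNat]
    norm_num [abs_lt, abs_of_pos, abs_of_neg]
  have hN : ∀ᶠ n : ℕ in atTop, 8/ε < (n:ℝ) := tendsto_natCast_atTop_atTop.eventually_gt_atTop _
  obtain ⟨N, hN⟩ := eventually_atTop.1 ((hL.eventually_lt_const hr).and hN)
  refine ⟨N, fun n hn => ?_⟩
  obtain ⟨h1, h2⟩ := hN n hn
  obtain ⟨z, hz, hzr⟩ := near_root5 _ _ _ _ _ r 0.23 (by norm_num) h1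
  have hre := (Complex.abs_re_le_norm (r-z)).trans_lt hzr
  have him := (Complex.abs_im_le_norm (r-z)).trans_lt hzr
  rw [abs_lt] at hre him
  simp only [Complex.sub_re, Complex.sub_im, r] at hre him
  have hn0 : (0:ℝ) < (n:ℝ)+1 := by positivity
  have e : (1:ℂ) - 2*z/((n:ℂ)+1) = 1 - ((2/((n:ℝ)+1) : ℝ) : ℂ) * z := by
    push_cast; ring
  refine ⟨1 - 2*z/((n:ℂ)+1), ?_, ?_, ?_⟩
  · rw [e, Complex.sub_re, Complex.re_ofReal_mul, Complex.one_re]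
    have : 0 < 2/((n:ℝ)+1) * (-z.re) := mul_pos (by positivity) (by norm_num at hre ⊢; linarith)
    linarith
  · rw [e, Complex.sub_im, Complex.im_ofReal_mul, Complex.one_im, zero_sub, abs_neg, abs_mul,
      abs_of_pos (by positivity)]
    have : |z.im| < 4 := by rw [abs_lt]; constructor <;> norm_num at him ⊢ <;> linarith
    rw [div_mul_eq_mul_div, div_lt_iff₀ hn0]
    rw [div_lt_iff₀ hε] at h2
    nlinarith
  · rw [integral_eq]
    have k1 : (n:ℂ)+1 ≠ 0 := by exact_mod_cast (by omega : n+1 ≠ 0)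
    have k2 : (n:ℂ)+2 ≠ 0 := by exact_mod_cast (by omega : n+2 ≠ 0)
    have k3 : (n:ℂ)+3 ≠ 0 := by exact_mod_cast (by omega : n+3 ≠ 0)
    have k4 : (n:ℂ)+4 ≠ 0 := by exact_mod_cast (by omega : n+4 ≠ 0)
    have k5 : (n:ℂ)+5 ≠ 0 := by exact_mod_cast (by omega : n+5 ≠ 0)
    have k6 : (n:ℂ)+6 ≠ 0 := by exact_mod_cast (by omega : n+6 ≠ 0)
    simp only [u] at hz
    push_cast at hz
    have h0 := congrArg (fun t => (2:ℂ)^(n+6)/((n:ℂ)+1)^6 * t) hz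
    simp only [mul_zero] at h0
    refine Eq.trans ?_ h0
    field_simp
    ring
end

section
/- Let P be a nonconstant complex polynomial with P(-1) = P(1) such that every root of the derivative P' is a real number. Then P' has a root in the open real interval (-1, 1). -/
theorem real_critical_points_rolle (P : Polynomial ℂ)
    (hdeg : 0 < P.natDegree) (heq : P.eval (-1) = P.eval 1)
    (hreal : ∀ z : ℂ, P.derivative.eval z = 0 → z.im = 0) :
    ∃ x : ℝ, -1 < x ∧ x < 1 ∧ P.derivative.eval (x : ℂ) = 0 := by
  by_cases h0 : P.derivative = 0
  · exact ⟨0, by norm_num, by norm_num, by simp [h0]⟩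
  set c := P.derivative.leadingCoeff with hc
  have hc0 : c ≠ 0 := Polynomial.leadingCoeff_ne_zero.2 h0
  have hfac : ∀ t : ℝ, (P.derivative.eval (t : ℂ) / c).im = 0 := by
    intro t
    have h1 := (IsAlgClosed.splits P.derivative).eq_prod_roots
    have h2 : P.derivative.eval (t : ℂ) =
        c * (P.derivative.roots.map (fun r => (t : ℂ) - r)).prod := by
      conv_lhs => rw [h1]
      simp [Polynomial.eval_multiset_prod, Multiset.map_map, hc]
    rw [h2, mul_div_cancel_left₀ _ hc0]
    refine Multiset.prod_induction (fun z : ℂ => z.im = 0) _ ?_ ?_ ?_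
    · intro a b ha hb
      simp [ha, hb]
    · simp
    · intro a ha
      obtain ⟨r, hr, rfl⟩ := Multiset.mem_map.1 ha
      have := hreal r (Polynomial.isRoot_of_mem_roots hr)
      simp [this]
  have hd : ∀ t : ℝ, HasDerivAt (fun s : ℝ => (P.eval (s : ℂ) / c).re)
      (P.derivative.eval (t : ℂ) / c).re t := fun t =>
    HasDerivAt.real_of_complex (e := fun z : ℂ => P.eval z / c)
      ((P.hasDerivAt (t : ℂ)).div_const c)
  obtain ⟨x, hx, hx0⟩ := exists_hasDerivAt_eq_zero (a := (-1 : ℝ)) (b := 1) (by norm_num)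
    (fun t _ => (hd t).continuousAt.continuousWithinAt) (by simp [heq]) (fun t _ => hd t)
  refine ⟨x, hx.1, hx.2, ?_⟩
  have : P.derivative.eval (x : ℂ) / c = 0 := Complex.ext hx0 (hfac x)
  simpa [hc0] using this
end
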